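/- (Decoding error event E3.) Let (S1,U0,U1,Y1) ∼ p on finite alphabets, and let ε > 0 and R0, R1 ≥ 0. Let (S1^n,Y1^n) be i.i.d. with per-letter law p(s1,y1); independently, for each m0 ∈ [1:2^{nR0}] let Ũ0^n(m0) be drawn with law ∏_{i=1}^n p_{U0}(u_{0i}), and for each sequence s̃1^n and each m1 ∈ [1:2^{nR1}] let Ũ1^n(s̃1^n,m1) be drawn with law ∏_{i=1}^n p_{U1|S1}(u_{1i}|s̃_{1i}), all mutually independent and independent of (S1^n,Y1^n). There exists δ(ε), tending to 0 as ε → 0, such that if H(S1) + R0 + R1 < I(U0,U1,S1;Y1) + I(U0;U1,S1) − 3δ(ε), then P{ (s̃1^n, Ũ0^n(m0), Ũ1^n(s̃1^n,m1), Y1^n) ∈ T_ε^{(n)} for some s̃1^n ≠ S1^n, some m0 ∈ [1:2^{nR0}], and some m1 ∈ [1:2^{nR1}] } → 0 as n → ∞. -/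

import Mathlib

/-!
The error event is controlled by a union bound over `s̃`, `m0`, `m1`. Once these are fixed, the
codewords `Ũ0(m0)`, `Ũ1(s̃,m1)` and `Y` are independent, so summing the probability of joint
typicality over all `s̃` gives `∑_{x typical} ∏ q(x_i)` with the (unnormalised) letter weight
`q(s,u0,u1,y) = p(u0) p(u1|s) p(y)` (`sum_fixed_messages`).

A change of measure bounds that sum: on a typical sequence the likelihood ratio `∏ q(x_i)/p(x_i)`
is at most `exp (n (∑ p log (q/p) + ε ∑ p |log (q/p)|))`, and `∏ p(x_i)` has total mass one
(`sum_typ_le`). The exponent is an entropy identity (`sum_log_ratio`):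
`∑ p log (q/p) = H(S1) - I(U0,U1,S1;Y1) - I(U0;U1,S1)`.
Therefore `δ(ε) = ε ∑ p |log (q/p)|` works. Entropies are in nats while codebooks have size
`⌈2^{nR}⌉ ≤ 2 exp(nR)`; as `log 2 ≤ 1` and `R ≥ 0` the rate condition is more than enough.
-/

open Real Filter

attribute [local instance] Classical.propDecidable

noncomputable section

namespace CSBC

/-- A probability mass function on a finite type. -/
def IsPMF {Ω : Type*} [Fintype Ω] (p : Ω → ℝ) : Prop :=
  (∀ ω, 0 ≤ p ω) ∧ ∑ ω, p ω = 1

/-- Distribution (pushforward pmf) of a random variable `X` under pmf `p`. -/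
def dist {Ω A : Type*} [Fintype Ω] [Fintype A] (p : Ω → ℝ) (X : Ω → A) : A → ℝ :=
  fun a => ∑ ω, if X ω = a then p ω else 0

/-- Shannon entropy of the random variable `X` under the pmf `p`. -/
def H {Ω A : Type*} [Fintype Ω] [Fintype A] (p : Ω → ℝ) (X : Ω → A) : ℝ :=
  -∑ a, dist p X a * Real.log (dist p X a)

/-- Mutual information `I(X;Y)` under the pmf `p`. -/
def I2 {Ω A B : Type*} [Fintype Ω] [Fintype A] [Fintype B]
    (p : Ω → ℝ) (X : Ω → A) (Y : Ω → B) : ℝ :=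
  H p X + H p Y - H p (fun ω => (X ω, Y ω))

/-- Conditional mutual information `I(X;Y|Z)` under the pmf `p`. -/
def CI {Ω A B C : Type*} [Fintype Ω] [Fintype A] [Fintype B] [Fintype C]
    (p : Ω → ℝ) (X : Ω → A) (Y : Ω → B) (Z : Ω → C) : ℝ :=
  H p (fun ω => (X ω, Z ω)) + H p (fun ω => (Y ω, Z ω))
    - H p (fun ω => (X ω, Y ω, Z ω)) - H p Z

end CSBC

open CSBC
namespace CSBC

/-- Empirical pmf of the sequence `x : Fin n → A`. -/
def emp {A : Type*} {n : ℕ} (x : Fin n → A) (a : A) : ℝ :=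
  ((Finset.univ.filter (fun i => x i = a)).card : ℝ) / n

/-- `x` is `ε`-typical with respect to the pmf `q`. -/
def Typ {A : Type*} [Fintype A] (q : A → ℝ) (ε : ℝ) {n : ℕ} (x : Fin n → A) : Prop :=
  ∀ a, |emp x a - q a| ≤ ε * q a

/-- The codebook size `⌈2^{nR}⌉` corresponding to rate `R` and blocklength `n`. -/
def nR (n : ℕ) (R : ℝ) : ℕ := Nat.ceil ((2 : ℝ) ^ ((n : ℝ) * R))

/-- Conditional pmf `b ↦ p(b|a)` obtained from a joint pmf on `A × B`
(uniform on null symbols `a`). -/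
def condPMF {A B : Type*} [Fintype A] [Fintype B] (pAB : A × B → ℝ) : A → B → ℝ :=
  fun a b =>
    if (∑ b', pAB (a, b')) = 0 then ((Fintype.card B : ℝ))⁻¹
    else pAB (a, b) / (∑ b', pAB (a, b'))

end CSBC
namespace CSBC

variable {A1 B0 B1 C1 : Type*} [Fintype A1] [Fintype B0] [Fintype B1] [Fintype C1]
  [DecidableEq A1] [DecidableEq B0] [DecidableEq B1] [DecidableEq C1]

/-- Probability of the decoding error event `E3`: some wrong source sequence
`s̃1^n ≠ S1^n` is jointly typical with `(Ũ0^n(m0), Ũ1^n(s̃1^n,m1), Y1^n)` for some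
`m0` and `m1`.  Here `(S1^n,Y1^n)` is i.i.d. with per-letter law `p(s1,y1)`;
independently, the codewords `Ũ0^n(m0)` are i.i.d. `p(u0)` and the codewords
`Ũ1^n(s̃1^n,m1)` are i.i.d. with per-letter law `p(u1|·)` applied to `s̃1^n`. -/
def e3FailP (p : A1 × B0 × B1 × C1 → ℝ) (ε R0 R1 : ℝ) (n : ℕ) : ℝ :=
  ∑ a : Fin n → A1 × C1, ∑ c0 : Fin (nR n R0) → Fin n → B0,
  ∑ c1 : (Fin n → A1) → Fin (nR n R1) → Fin n → B1,
    (∏ i, dist p (fun ω => (ω.1, ω.2.2.2)) (a i))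
    * (∏ m0, ∏ i, dist p (fun ω => ω.2.1) (c0 m0 i))
    * (∏ s1seq, ∏ m1, ∏ i,
        condPMF (dist p (fun ω => (ω.1, ω.2.2.1))) (s1seq i) (c1 s1seq m1 i))
    * (if ∃ s' : Fin n → A1, s' ≠ (fun i => (a i).1) ∧ ∃ m0 m1,
          Typ p ε (fun i => (s' i, c0 m0 i, c1 s' m1 i, (a i).2))
       then 1 else 0)

set_option linter.unusedSectionVars false

/-! ### Finite sums over sequences -/

lemma sum_prod_seq {J K : Type*} [Fintype J] [DecidableEq J] [Fintype K] (w : J → K → ℝ) :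
    ∑ c : J → K, ∏ j, w j (c j) = ∏ j, ∑ k, w j k := by
  rw [Finset.prod_univ_sum, Fintype.piFinset_univ]

/-- Marginalisation: under a product of probability weights, a function of a single coordinate
is averaged by the weight of that coordinate alone. -/
lemma sum_prod_marginal {J K : Type*} [Fintype J] [DecidableEq J] [Fintype K]
    (w : J → K → ℝ) (hw : ∀ j, ∑ k, w j k = 1) (j0 : J) (f : K → ℝ) :
    ∑ c : J → K, (∏ j, w j (c j)) * f (c j0) = ∑ k, w j0 k * f k := by
  have h1 : ∀ c : J → K, (∏ j, w j (c j)) * f (c j0)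
      = ∏ j, (w j (c j) * if j = j0 then f (c j) else 1) := by
    intro c
    rw [Finset.prod_mul_distrib]
    congr 1
    rw [Finset.prod_ite_eq' Finset.univ j0 (fun j => f (c j))]
    simp
  rw [Finset.sum_congr rfl (fun c _ => h1 c),
    sum_prod_seq (fun j k => w j k * if j = j0 then f k else 1),
    Finset.prod_eq_single j0]
  · simp
  · intro j _ hj
    simp [hj, hw]
  · simp

lemma sum_prod_seq_eq_one {K : Type*} [Fintype K] {n : ℕ} (w : Fin n → K → ℝ)
    (hw : ∀ i, ∑ k, w i k = 1) : ∑ c : Fin n → K, ∏ i, w i (c i) = 1 := by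
  rw [sum_prod_seq]
  simp [hw]

lemma sum_pair_seq {A B : Type*} [Fintype A] [Fintype B] {n : ℕ}
    (F : (Fin n → A × B) → ℝ) :
    ∑ x, F x = ∑ a : Fin n → A, ∑ b : Fin n → B, F (fun i => (a i, b i)) := by
  classical
  rw [← Fintype.sum_prod_type' (f := fun (a : Fin n → A) (b : Fin n → B) => F (fun i => (a i, b i)))]
  exact Fintype.sum_equiv (Equiv.arrowProdEquivProdArrow (Fin n) (fun _ => A) (fun _ => B)) _ _
    (fun x => rfl)

lemma sum_comm_three {A B C D : Type*} [Fintype A] [Fintype B] [Fintype C] [Fintype D]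
    (f : A → B → C → D → ℝ) :
    ∑ a, ∑ b, ∑ c, ∑ d, f a b c d = ∑ d, ∑ a, ∑ b, ∑ c, f a b c d :=
  (Finset.sum_congr rfl fun _ _ =>
    (Finset.sum_congr rfl fun _ _ => Finset.sum_comm).trans Finset.sum_comm).trans Finset.sum_comm

/-! ### Marginal pmfs and entropies -/

lemma dist_nonneg' {Ω A : Type*} [Fintype Ω] [Fintype A] {p : Ω → ℝ} (hp : IsPMF p)
    (X : Ω → A) (a : A) : 0 ≤ dist p X a :=
  Finset.sum_nonneg fun ω _ => by split_ifs <;> simp [hp.1 ω]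

lemma sum_dist_mul {Ω A : Type*} [Fintype Ω] [Fintype A] (p : Ω → ℝ)
    (X : Ω → A) (g : A → ℝ) : ∑ a, dist p X a * g a = ∑ ω, p ω * g (X ω) := by
  simp only [dist, Finset.sum_mul]
  rw [Finset.sum_comm]
  refine Finset.sum_congr rfl fun ω _ => ?_
  simp [ite_mul]

lemma sum_dist {Ω A : Type*} [Fintype Ω] [Fintype A] {p : Ω → ℝ} (hp : IsPMF p)
    (X : Ω → A) : ∑ a, dist p X a = 1 := by
  have := sum_dist_mul p X (fun _ => 1)
  simpa [hp.2] using this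

lemma dist_pos {Ω A : Type*} [Fintype Ω] [Fintype A] {p : Ω → ℝ} (hp : IsPMF p)
    (X : Ω → A) {ω : Ω} (h : 0 < p ω) : 0 < dist p X (X ω) := by
  refine Finset.sum_pos' (fun ω' _ => ?_) ⟨ω, Finset.mem_univ _, by simpa using h⟩
  split_ifs <;> simp [hp.1 ω']

/-- Entropy as the expected log-likelihood, `H(X) = -E log p_X(X)`. -/
lemma H_eq {Ω A : Type*} [Fintype Ω] [Fintype A] (p : Ω → ℝ) (X : Ω → A) :
    H p X = -∑ ω, p ω * Real.log (dist p X (X ω)) := by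
  rw [H, sum_dist_mul p X (fun a => Real.log (dist p X a))]

lemma sum_dist_pair_left {Ω A B : Type*} [Fintype Ω] [Fintype A] [Fintype B] (p : Ω → ℝ)
    (X : Ω → A) (Y : Ω → B) (a : A) :
    ∑ b, dist p (fun ω => (X ω, Y ω)) (a, b) = dist p X a := by
  simp only [dist, Prod.mk.injEq]
  rw [Finset.sum_comm]
  refine Finset.sum_congr rfl fun ω _ => ?_
  by_cases h : X ω = a <;> simp [h]

lemma sum_dist_pair_right {Ω A B : Type*} [Fintype Ω] [Fintype A] [Fintype B] (p : Ω → ℝ)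
    (X : Ω → A) (Y : Ω → B) (b : B) :
    ∑ a, dist p (fun ω => (X ω, Y ω)) (a, b) = dist p Y b := by
  simp only [dist, Prod.mk.injEq]
  rw [Finset.sum_comm]
  refine Finset.sum_congr rfl fun ω _ => ?_
  by_cases h : Y ω = b <;> simp [h]

lemma condPMF_nonneg {A B : Type*} [Fintype A] [Fintype B] {r : A × B → ℝ}
    (hr : ∀ x, 0 ≤ r x) (a : A) (b : B) : 0 ≤ condPMF r a b := by
  unfold condPMF
  split_ifs
  · positivity
  · exact div_nonneg (hr _) (Finset.sum_nonneg fun b _ => hr _)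

lemma sum_condPMF {A B : Type*} [Fintype A] [Fintype B] [Nonempty B] (r : A × B → ℝ)
    (a : A) : ∑ b, condPMF r a b = 1 := by
  unfold condPMF
  split_ifs with h
  · simp
  · rw [← Finset.sum_div, div_self h]

/-! ### Change of measure on the typical set -/

/-- On an `ε`-typical sequence the empirical mean of `g` exceeds its `p`-mean by at most
`ε` times the `p`-mean of `|g|`. -/
lemma typ_sum_le {X : Type*} [Fintype X] {p : X → ℝ} {ε : ℝ} {n : ℕ} {x : Fin n → X}
    (hx : Typ p ε x) (g : X → ℝ) :
    ∑ i, g (x i) ≤ n * (∑ a, p a * g a + ε * ∑ a, p a * |g a|) := by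
  classical
  have h1 : ∑ i, g (x i) = n * ∑ a, emp x a * g a := by
    have : ∀ a, (n : ℝ) * emp x a = ∑ i, if x i = a then (1 : ℝ) else 0 := by
      intro a
      rcases Nat.eq_zero_or_pos n with rfl | hn
      · simp
      · have : (n : ℝ) ≠ 0 := by positivity
        rw [emp, mul_div_cancel₀ _ this, Finset.sum_boole]
    simp_rw [Finset.mul_sum, ← mul_assoc, this, Finset.sum_mul]
    rw [Finset.sum_comm]
    refine Finset.sum_congr rfl fun i _ => ?_
    simp [ite_mul]
  rw [h1, Finset.mul_sum (a := ε), ← Finset.sum_add_distrib]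
  gcongr with a
  have h2 : (emp x a - p a) * g a ≤ ε * p a * |g a| := by
    calc (emp x a - p a) * g a ≤ |(emp x a - p a) * g a| := le_abs_self _
      _ = |emp x a - p a| * |g a| := abs_mul _ _
      _ ≤ _ := by gcongr; exact hx a
  linarith

lemma typ_support {X : Type*} [Fintype X] {p : X → ℝ} (hp : IsPMF p) {ε : ℝ} {n : ℕ}
    {x : Fin n → X} (hx : Typ p ε x) (i : Fin n) : 0 < p (x i) := by
  refine lt_of_le_of_ne (hp.1 _) fun h => ?_
  have h1 := hx (x i)
  rw [← h, sub_zero, mul_zero] at h1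
  have h2 : emp x (x i) = 0 := abs_nonpos_iff.mp h1
  have hn : (0 : ℝ) < n := by exact_mod_cast i.pos
  have h3 : 0 < (Finset.univ.filter (fun j => x j = x i)).card :=
    Finset.card_pos.mpr ⟨i, by simp⟩
  have h4 : 0 < emp x (x i) := by
    unfold emp
    have : (0 : ℝ) < ((Finset.univ.filter (fun j => x j = x i)).card : ℝ) := by
      exact_mod_cast h3
    positivity
  linarith

/-- Change of measure: the `q`-mass of the `p`-typical set is exponentially small with rate
about `D(p‖q)`. The weight `q` need not sum to one. -/
lemma sum_typ_le {X : Type*} [Fintype X] {p : X → ℝ} (hp : IsPMF p) (q : X → ℝ)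
    (hq : ∀ x, 0 < p x → 0 < q x) (ε : ℝ) (n : ℕ) :
    ∑ x : Fin n → X, (∏ i, q (x i)) * (if Typ p ε x then 1 else 0) ≤
      Real.exp (n * (∑ a, p a * Real.log (q a / p a)
        + ε * ∑ a, p a * |Real.log (q a / p a)|)) := by
  set E := Real.exp (n * (∑ a, p a * Real.log (q a / p a)
        + ε * ∑ a, p a * |Real.log (q a / p a)|)) with hE
  have h1 : ∀ x : Fin n → X, (∏ i, q (x i)) * (if Typ p ε x then 1 else 0)
      ≤ (∏ i, p (x i)) * E := by
    intro x
    have h0 : 0 ≤ ∏ i, p (x i) := Finset.prod_nonneg fun i _ => hp.1 _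
    split_ifs with hx
    · have h2 : ∏ i, q (x i) = (∏ i, p (x i)) * Real.exp (∑ i, Real.log (q (x i) / p (x i))) := by
        rw [Real.exp_sum, ← Finset.prod_mul_distrib]
        refine Finset.prod_congr rfl fun i _ => ?_
        have hpi := typ_support hp hx i
        rw [Real.exp_log (div_pos (hq _ hpi) hpi)]
        field_simp
      rw [mul_one, h2]
      refine mul_le_mul_of_nonneg_left (Real.exp_le_exp.mpr ?_) h0
      exact typ_sum_le hx (fun a => Real.log (q a / p a))
    · rw [mul_zero]
      positivity
  calc _ ≤ ∑ x : Fin n → X, (∏ i, p (x i)) * E := Finset.sum_le_sum fun x _ => h1 x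
    _ = E := by
      rw [← Finset.sum_mul, sum_prod_seq_eq_one (fun _ => p) (fun _ => hp.2), one_mul]

/-! ### The letter weight of a wrong codeword tuple -/

/-- The letter weight `q(s,u0,u1,y) = p(u0) p(u1|s) p(y)`; its mass is the size of the alphabet
of `s`, which carries counting measure. -/
def wrongW (p : A1 × B0 × B1 × C1 → ℝ) (x : A1 × B0 × B1 × C1) : ℝ :=
  dist p (fun ω => ω.2.2.2) x.2.2.2 * (dist p (fun ω => ω.2.1) x.2.1 *
    condPMF (dist p (fun ω => (ω.1, ω.2.2.1))) x.1 x.2.2.1)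

lemma condPMF_eq {p : A1 × B0 × B1 × C1 → ℝ} (hp : IsPMF p) {x : A1 × B0 × B1 × C1}
    (hx : 0 < p x) :
    condPMF (dist p (fun ω => (ω.1, ω.2.2.1))) x.1 x.2.2.1
      = dist p (fun ω => (ω.1, ω.2.2.1)) (x.1, x.2.2.1) / dist p (fun ω => ω.1) x.1 := by
  have h := sum_dist_pair_left p (fun ω => ω.1) (fun ω => ω.2.2.1) x.1
  have hpos := dist_pos hp (fun ω => ω.1) hx
  rw [condPMF, h, if_neg hpos.ne']

lemma wrongW_pos {p : A1 × B0 × B1 × C1 → ℝ} (hp : IsPMF p) (x : A1 × B0 × B1 × C1)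
    (hx : 0 < p x) : 0 < wrongW p x := by
  rw [wrongW, condPMF_eq hp hx]
  have h1 := dist_pos hp (fun ω => ω.1) hx
  have h2 := dist_pos hp (fun ω => ω.2.1) hx
  have h3 := dist_pos hp (fun ω => ω.2.2.2) hx
  have h4 := dist_pos hp (fun ω => (ω.1, ω.2.2.1)) hx
  positivity

/-- The exponent of the change of measure, written with entropies. -/
lemma sum_log_ratio {p : A1 × B0 × B1 × C1 → ℝ} (hp : IsPMF p) :
    ∑ x, p x * Real.log (wrongW p x / p x) =
      H p (fun ω => ω.1) - I2 p (fun ω => (ω.2.1, ω.2.2.1, ω.1)) (fun ω => ω.2.2.2)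
        - I2 p (fun ω => ω.2.1) (fun ω => (ω.2.2.1, ω.1)) := by
  have hall : H p (fun ω => ((ω.2.1, ω.2.2.1, ω.1), ω.2.2.2)) = -∑ x, p x * Real.log (p x) := by
    rw [H_eq]
    congr 1
    refine Finset.sum_congr rfl fun x _ => ?_
    congr 2
    rw [dist, Finset.sum_eq_single x]
    · simp
    · rintro ⟨a, b, c, d⟩ _ hne
      rw [if_neg]
      rintro h
      apply hne
      simp only [Prod.mk.injEq] at h
      obtain ⟨⟨h1, h2, h3⟩, h4⟩ := h
      ext <;> simp_all
    · simp
  have hswap : H p (fun ω => (ω.2.2.1, ω.1)) =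
      -∑ x, p x * Real.log (dist p (fun ω => (ω.1, ω.2.2.1)) (x.1, x.2.2.1)) := by
    rw [H_eq]
    congr 1
    refine Finset.sum_congr rfl fun x _ => ?_
    congr 2
    refine Finset.sum_congr rfl fun ω _ => ?_
    simp only [Prod.mk.injEq, and_comm]
  have hterm : ∀ x, p x * Real.log (wrongW p x / p x) =
      p x * Real.log (dist p (fun ω => ω.2.2.2) x.2.2.2)
      + p x * Real.log (dist p (fun ω => ω.2.1) x.2.1)
      + p x * Real.log (dist p (fun ω => (ω.1, ω.2.2.1)) (x.1, x.2.2.1))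
      - p x * Real.log (dist p (fun ω => ω.1) x.1) - p x * Real.log (p x) := by
    intro x
    rcases (hp.1 x).eq_or_lt with h | h
    · simp [← h]
    · have h1 := (dist_pos hp (fun ω => ω.1) h).ne'
      have h2 := (dist_pos hp (fun ω => ω.2.1) h).ne'
      have h3 := (dist_pos hp (fun ω => ω.2.2.2) h).ne'
      have h4 := (dist_pos hp (fun ω => (ω.1, ω.2.2.1)) h).ne'
      rw [Real.log_div (wrongW_pos hp x h).ne' h.ne', wrongW, condPMF_eq hp h,
        Real.log_mul h3 (mul_ne_zero h2 (div_ne_zero h4 h1)),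
        Real.log_mul h2 (div_ne_zero h4 h1), Real.log_div h4 h1]
      ring
  rw [Finset.sum_congr rfl fun x _ => hterm x]
  simp only [Finset.sum_sub_distrib, Finset.sum_add_distrib]
  simp only [I2, hall, hswap]
  rw [H_eq p (fun ω => ω.1), H_eq p (fun ω => ω.2.1), H_eq p (fun ω => ω.2.2.2)]
  ring

/-! ### Union bound -/

/-- For fixed messages, averaging over the source, the channel output and both codebooks leaves
only the three sequences that enter the typicality test. -/
lemma sum_fixed_messages {p : A1 × B0 × B1 × C1 → ℝ} (hp : IsPMF p) [Nonempty B1]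
    (ε : ℝ) (n M0 M1 : ℕ) (m0 : Fin M0) (m1 : Fin M1) :
    ∑ s' : Fin n → A1, ∑ a : Fin n → A1 × C1, ∑ c0 : Fin M0 → Fin n → B0,
      ∑ c1 : (Fin n → A1) → Fin M1 → Fin n → B1,
      (∏ i, dist p (fun ω => (ω.1, ω.2.2.2)) (a i))
      * (∏ m0, ∏ i, dist p (fun ω => ω.2.1) (c0 m0 i))
      * (∏ s1seq, ∏ m1, ∏ i,
        condPMF (dist p (fun ω => (ω.1, ω.2.2.1))) (s1seq i) (c1 s1seq m1 i))
      * (if Typ p ε (fun i => (s' i, c0 m0 i, c1 s' m1 i, (a i).2)) then 1 else 0)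
    = ∑ x : Fin n → A1 × B0 × B1 × C1,
        (∏ i, wrongW p (x i)) * (if Typ p ε x then 1 else 0) := by
  set κ := condPMF (dist p (fun ω => (ω.1, ω.2.2.1))) with hκ
  have hκ1 : ∀ s : Fin n → A1, ∑ u : Fin n → B1, ∏ i, κ (s i) (u i) = 1 := fun s =>
    sum_prod_seq_eq_one (fun i => κ (s i)) fun i => sum_condPMF _ _
  rw [sum_pair_seq]
  refine Finset.sum_congr rfl fun s' _ => ?_
  have hc1 : ∀ f : (Fin n → B1) → ℝ,
      ∑ c1 : (Fin n → A1) → Fin M1 → Fin n → B1,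
        (∏ s, ∏ m1, ∏ i, κ (s i) (c1 s m1 i)) * f (c1 s' m1)
      = ∑ u1 : Fin n → B1, (∏ i, κ (s' i) (u1 i)) * f u1 := by
    intro f
    rw [sum_prod_marginal (fun (s : Fin n → A1) (c : Fin M1 → Fin n → B1) =>
      ∏ m1, ∏ i, κ (s i) (c m1 i)) ?_ s' (fun c => f (c m1))]
    · exact sum_prod_marginal (fun (_ : Fin M1) (u : Fin n → B1) => ∏ i, κ (s' i) (u i))
        (fun _ => hκ1 s') m1 f
    · intro s
      rw [sum_prod_seq (fun (_ : Fin M1) (u : Fin n → B1) => ∏ i, κ (s i) (u i))]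
      simp [hκ1]
  have hc0 : ∀ f : (Fin n → B0) → ℝ,
      ∑ c0 : Fin M0 → Fin n → B0,
        (∏ m0, ∏ i, dist p (fun ω => ω.2.1) (c0 m0 i)) * f (c0 m0)
      = ∑ u0 : Fin n → B0, (∏ i, dist p (fun ω => ω.2.1) (u0 i)) * f u0 := fun f =>
    sum_prod_marginal (fun (_ : Fin M0) (u : Fin n → B0) => ∏ i, dist p (fun ω => ω.2.1) (u i))
      (fun _ => sum_prod_seq_eq_one _ fun _ => sum_dist hp _) m0 f
  have ha : ∀ f : (Fin n → C1) → ℝ,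
      ∑ a : Fin n → A1 × C1,
        (∏ i, dist p (fun ω => (ω.1, ω.2.2.2)) (a i)) * f (fun i => (a i).2)
      = ∑ y : Fin n → C1, (∏ i, dist p (fun ω => ω.2.2.2) (y i)) * f y := by
    intro f
    rw [sum_pair_seq, Finset.sum_comm]
    refine Finset.sum_congr rfl fun y _ => ?_
    dsimp only
    rw [← Finset.sum_mul,
      sum_prod_seq (fun i s => dist p (fun ω => (ω.1, ω.2.2.2)) (s, y i))]
    congr 1
    exact Finset.prod_congr rfl fun i _ =>
      sum_dist_pair_right p (fun ω => ω.1) (fun ω => ω.2.2.2) (y i)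
  simp only [mul_assoc, ← Finset.mul_sum]
  simp only [fun (u0 : Fin n → B0) (y : Fin n → C1) => hc1 (fun u1 =>
    if Typ p ε (fun i => (s' i, u0 i, u1 i, y i)) then 1 else 0)]
  simp only [fun (y : Fin n → C1) => hc0 (fun u0 => ∑ u1 : Fin n → B1, (∏ i, κ (s' i) (u1 i)) *
    if Typ p ε (fun i => (s' i, u0 i, u1 i, y i)) then 1 else 0)]
  rw [ha (fun y => ∑ u0 : Fin n → B0, (∏ i, dist p (fun ω => ω.2.1) (u0 i)) *
    ∑ u1 : Fin n → B1, (∏ i, κ (s' i) (u1 i)) *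
    if Typ p ε (fun i => (s' i, u0 i, u1 i, y i)) then 1 else 0)]
  simp only [sum_pair_seq, Finset.mul_sum]
  rw [Finset.sum_comm]
  refine Finset.sum_congr rfl fun u0 _ => ?_
  rw [Finset.sum_comm]
  refine Finset.sum_congr rfl fun u1 _ => Finset.sum_congr rfl fun y _ => ?_
  simp only [wrongW, ← hκ, Finset.prod_mul_distrib, mul_assoc]

lemma e3FailP_nonneg {p : A1 × B0 × B1 × C1 → ℝ} (hp : IsPMF p) (ε R0 R1 : ℝ) (n : ℕ) :
    0 ≤ e3FailP p ε R0 R1 n := by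
  refine Finset.sum_nonneg fun a _ => Finset.sum_nonneg fun c0 _ => Finset.sum_nonneg fun c1 _ => ?_
  refine mul_nonneg (mul_nonneg (mul_nonneg ?_ ?_) ?_) (by split_ifs <;> simp)
  · exact Finset.prod_nonneg fun i _ => dist_nonneg' hp _ _
  · exact Finset.prod_nonneg fun m _ => Finset.prod_nonneg fun i _ => dist_nonneg' hp _ _
  · exact Finset.prod_nonneg fun s _ => Finset.prod_nonneg fun m _ =>
      Finset.prod_nonneg fun i _ => condPMF_nonneg (dist_nonneg' hp _) _ _

lemma e3FailP_le {p : A1 × B0 × B1 × C1 → ℝ} (hp : IsPMF p) (ε R0 R1 : ℝ) (n : ℕ) :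
    e3FailP p ε R0 R1 n ≤ nR n R0 * (nR n R1 *
      ∑ x : Fin n → A1 × B0 × B1 × C1,
        (∏ i, wrongW p (x i)) * (if Typ p ε x then 1 else 0)) := by
  have hne : Nonempty B1 := by
    by_contra h
    rw [not_nonempty_iff] at h
    have := hp.2
    simp at this
  have hunion : ∀ (a : Fin n → A1 × C1) (c0 : Fin (nR n R0) → Fin n → B0)
      (c1 : (Fin n → A1) → Fin (nR n R1) → Fin n → B1),
      (if ∃ s' : Fin n → A1, s' ≠ (fun i => (a i).1) ∧ ∃ m0 m1,
          Typ p ε (fun i => (s' i, c0 m0 i, c1 s' m1 i, (a i).2)) then (1 : ℝ) else 0)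
      ≤ ∑ m0, ∑ m1, ∑ s' : Fin n → A1,
        if Typ p ε (fun i => (s' i, c0 m0 i, c1 s' m1 i, (a i).2)) then (1 : ℝ) else 0 := by
    intro a c0 c1
    have hnn : ∀ m0 m1 (s' : Fin n → A1), (0 : ℝ) ≤
        if Typ p ε (fun i => (s' i, c0 m0 i, c1 s' m1 i, (a i).2)) then (1 : ℝ) else 0 := by
      intro m0 m1 s'
      split_ifs <;> simp
    split_ifs with h
    · obtain ⟨s', -, m0, m1, ht⟩ := h
      calc (1 : ℝ) = if Typ p ε (fun i => (s' i, c0 m0 i, c1 s' m1 i, (a i).2)) then 1 else 0 := by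
            rw [if_pos ht]
        _ ≤ ∑ s' : Fin n → A1,
            if Typ p ε (fun i => (s' i, c0 m0 i, c1 s' m1 i, (a i).2)) then (1 : ℝ) else 0 :=
            Finset.single_le_sum (f := fun s' : Fin n → A1 =>
              if Typ p ε (fun i => (s' i, c0 m0 i, c1 s' m1 i, (a i).2)) then (1 : ℝ) else 0)
              (fun s' _ => hnn m0 m1 s') (Finset.mem_univ s')
        _ ≤ ∑ m1, ∑ s' : Fin n → A1,
            if Typ p ε (fun i => (s' i, c0 m0 i, c1 s' m1 i, (a i).2)) then (1 : ℝ) else 0 :=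
            Finset.single_le_sum (f := fun m1 => ∑ s' : Fin n → A1,
              if Typ p ε (fun i => (s' i, c0 m0 i, c1 s' m1 i, (a i).2)) then (1 : ℝ) else 0)
              (fun m1 _ => Finset.sum_nonneg fun s' _ => hnn m0 m1 s') (Finset.mem_univ m1)
        _ ≤ _ :=
            Finset.single_le_sum (f := fun m0 => ∑ m1, ∑ s' : Fin n → A1,
              if Typ p ε (fun i => (s' i, c0 m0 i, c1 s' m1 i, (a i).2)) then (1 : ℝ) else 0)
              (fun m0 _ => Finset.sum_nonneg fun m1 _ => Finset.sum_nonneg fun s' _ =>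
                hnn m0 m1 s') (Finset.mem_univ m0)
    · exact Finset.sum_nonneg fun m0 _ => Finset.sum_nonneg fun m1 _ =>
        Finset.sum_nonneg fun s' _ => hnn m0 m1 s'
  have hconst : (nR n R0 : ℝ) * (nR n R1 *
      ∑ x : Fin n → A1 × B0 × B1 × C1,
        (∏ i, wrongW p (x i)) * (if Typ p ε x then 1 else 0))
      = ∑ _m0 : Fin (nR n R0), ∑ _m1 : Fin (nR n R1), ∑ x : Fin n → A1 × B0 × B1 × C1,
        (∏ i, wrongW p (x i)) * (if Typ p ε x then 1 else 0) := by
    simp only [Finset.sum_const, Finset.card_univ, Fintype.card_fin, nsmul_eq_mul]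
  rw [hconst, Finset.sum_congr rfl fun m0 _ => Finset.sum_congr rfl fun m1 _ =>
    (sum_fixed_messages hp ε n (nR n R0) (nR n R1) m0 m1).symm]
  -- Bring the sums over the messages and `s'` inside the average, where the union bound applies.
  calc e3FailP p ε R0 R1 n
      ≤ ∑ a : Fin n → A1 × C1, ∑ c0 : Fin (nR n R0) → Fin n → B0,
        ∑ c1 : (Fin n → A1) → Fin (nR n R1) → Fin n → B1, ∑ m0, ∑ m1, ∑ s' : Fin n → A1,
        (∏ i, dist p (fun ω => (ω.1, ω.2.2.2)) (a i))
        * (∏ m0, ∏ i, dist p (fun ω => ω.2.1) (c0 m0 i))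
        * (∏ s1seq, ∏ m1, ∏ i,
          condPMF (dist p (fun ω => (ω.1, ω.2.2.1))) (s1seq i) (c1 s1seq m1 i))
        * (if Typ p ε (fun i => (s' i, c0 m0 i, c1 s' m1 i, (a i).2)) then 1 else 0) := by
        refine Finset.sum_le_sum fun a _ => Finset.sum_le_sum fun c0 _ =>
          Finset.sum_le_sum fun c1 _ => ?_
        simp only [← Finset.mul_sum]
        refine mul_le_mul_of_nonneg_left (hunion a c0 c1) (mul_nonneg (mul_nonneg ?_ ?_) ?_)
        · exact Finset.prod_nonneg fun i _ => dist_nonneg' hp _ _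
        · exact Finset.prod_nonneg fun m _ => Finset.prod_nonneg fun i _ => dist_nonneg' hp _ _
        · exact Finset.prod_nonneg fun s _ => Finset.prod_nonneg fun m _ =>
            Finset.prod_nonneg fun i _ => condPMF_nonneg (dist_nonneg' hp _) _ _
    _ = _ := by
        rw [sum_comm_three]
        refine Finset.sum_congr rfl fun m0 _ => ?_
        rw [sum_comm_three]
        refine Finset.sum_congr rfl fun m1 _ => ?_
        rw [sum_comm_three]

/-- `⌈2^{nR}⌉ ≤ 2 · 2^{nR} ≤ 2 exp(nR)`. -/
lemma nR_le (n : ℕ) {R : ℝ} (hR : 0 ≤ R) : (nR n R : ℝ) ≤ 2 * Real.exp (n * R) := by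
  have hnR : 0 ≤ (n : ℝ) * R := by positivity
  have h1 : (2 : ℝ) ^ ((n : ℝ) * R) ≤ Real.exp (n * R) := by
    rw [Real.rpow_def_of_pos (by norm_num)]
    refine Real.exp_le_exp.mpr ?_
    have : Real.log 2 ≤ 1 := by linarith [Real.log_two_lt_d9]
    nlinarith
  have h2 : (1 : ℝ) ≤ Real.exp (n * R) := Real.one_le_exp hnR
  have h3 := Nat.ceil_lt_add_one (a := (2 : ℝ) ^ ((n : ℝ) * R)) (by positivity)
  unfold nR
  linarith

/-- decoding error event `E3`. -/
theorem error_event_E3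
    (p : A1 × B0 × B1 × C1 → ℝ) (hp : IsPMF p) :
    ∃ δ : ℝ → ℝ, Tendsto δ (nhdsWithin 0 (Set.Ioi 0)) (nhds 0) ∧
      ∀ ε R0 R1 : ℝ, 0 < ε → 0 ≤ R0 → 0 ≤ R1 →
        H p (fun ω => ω.1) + R0 + R1 <
          I2 p (fun ω => (ω.2.1, ω.2.2.1, ω.1)) (fun ω => ω.2.2.2)
            + I2 p (fun ω => ω.2.1) (fun ω => (ω.2.2.1, ω.1)) - 3 * δ ε →
        Tendsto (fun n => e3FailP p ε R0 R1 n) atTop (nhds 0) := by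
  set K := ∑ x, p x * |Real.log (wrongW p x / p x)| with hK
  have hK0 : 0 ≤ K := Finset.sum_nonneg fun x _ => mul_nonneg (hp.1 x) (abs_nonneg _)
  refine ⟨fun ε => ε * K, ?_, ?_⟩
  · have h : Tendsto (fun ε : ℝ => ε * K) (nhds 0) (nhds (0 * K)) :=
      (continuous_id.mul continuous_const).tendsto 0
    rw [zero_mul] at h
    exact h.mono_left nhdsWithin_le_nhds
  · intro ε R0 R1 hε hR0 hR1 hrate
    set D := ∑ x, p x * Real.log (wrongW p x / p x) with hD
    have hDval := sum_log_ratio hp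
    have hneg : R0 + R1 + (D + ε * K) < 0 := by
      have : 0 ≤ ε * K := by positivity
      simp only at hrate
      linarith
    have hbound : ∀ n : ℕ, e3FailP p ε R0 R1 n
        ≤ 4 * Real.exp (R0 + R1 + (D + ε * K)) ^ n := by
      intro n
      calc e3FailP p ε R0 R1 n ≤ _ := e3FailP_le hp ε R0 R1 n
        _ ≤ nR n R0 * (nR n R1 * Real.exp (n * (D + ε * K))) := by
            gcongr
            exact sum_typ_le hp (wrongW p) (wrongW_pos hp) ε n
        _ ≤ 2 * Real.exp (n * R0) * (2 * Real.exp (n * R1) * Real.exp (n * (D + ε * K))) := by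
            gcongr
            · exact nR_le n hR0
            · exact nR_le n hR1
        _ = 4 * Real.exp (R0 + R1 + (D + ε * K)) ^ n := by
            rw [← Real.exp_nat_mul, mul_add (n : ℝ) (R0 + R1), Real.exp_add, mul_add (n : ℝ) R0 R1,
              Real.exp_add (n * R0)]
            ring
    have hlim : Tendsto (fun n : ℕ => 4 * Real.exp (R0 + R1 + (D + ε * K)) ^ n) atTop
        (nhds 0) := by
      have := (tendsto_pow_atTop_nhds_zero_of_lt_one (Real.exp_pos _).le
        (by rw [← Real.exp_zero]; exact Real.exp_lt_exp.mpr hneg)).const_mul 4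
      rwa [mul_zero] at this
    exact squeeze_zero (fun n => e3FailP_nonneg hp ε R0 R1 n) hbound hlim

end CSBC
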